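/- arXiv:2501.14076 — 2 statements merged into one kernel-verified Lean document; each statement's English description precedes it below -/
import Mathlib

section
/- Let μ be a regular cardinal and M a transitive model of ZFC⁻ such that o(M) = μ⁺ and μ is the largest cardinal of M. Then for any ordinal α < μ⁺: cof^M(α) = μ if and only if cof(α) = μ. -/
/- ## A framework for transitive class/set models of fragments of ZFC,
     inside the universe `ZFSet` of ZF sets. -/

open FirstOrder FirstOrder.Language

/-- The language of set theory: a single binary relation symbol `∈`. -/
inductive SetLRel : ℕ → Type
  | mem : SetLRel 2

/-- The first-order language of set theory. -/
def setL : FirstOrder.Language := ⟨fun _ => Empty, SetLRel⟩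

/-- Evaluation of a term of the language of set theory (terms are just variables). -/
def tval {n : ℕ} (v : Fin n → ZFSet) : setL.Term (Empty ⊕ Fin n) → ZFSet
  | .var (Sum.inl e) => e.elim
  | .var (Sum.inr i) => v i
  | .func f _ => f.elim

/-- Tarskian satisfaction of a formula of the language of set theory in a class `S` of
ZF-sets (equipped with true membership), under the assignment `v`. -/
def ZSat (S : Set ZFSet) : ∀ {n : ℕ}, setL.BoundedFormula Empty n → (Fin n → ZFSet) → Prop
  | _, .falsum, _ => False
  | _, .equal t u, v => tval v t = tval v u
  | _, .rel R ts, v =>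
      match R with
      | SetLRel.mem => tval v (ts 0) ∈ tval v (ts 1)
  | _, .imp φ ψ, v => ZSat S φ v → ZSat S ψ v
  | _, .all φ, v => ∀ x ∈ S, ZSat S φ (Fin.snoc v x)

/-- Satisfaction of a sentence in a class of ZF-sets. -/
def SatS (S : Set ZFSet) (σ : setL.Sentence) : Prop := ZSat S σ finZeroElim

/-- A class of ZF-sets is transitive. -/
def IsTransClass (S : Set ZFSet) : Prop := ∀ x ∈ S, ∀ y ∈ x, y ∈ S

/-- `r` is a well-ordering of the set `x`, from the point of view of the class `S`
(Kuratowski pairs code the relation; minimality is required for nonempty subsets of `x`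
lying in `S`). -/
def WellOrders (S : Set ZFSet) (r x : ZFSet) : Prop :=
  (∀ a ∈ x, ZFSet.pair a a ∉ r) ∧
  (∀ a ∈ x, ∀ b ∈ x, ∀ c ∈ x, ZFSet.pair a b ∈ r → ZFSet.pair b c ∈ r → ZFSet.pair a c ∈ r) ∧
  (∀ a ∈ x, ∀ b ∈ x, a ≠ b → (ZFSet.pair a b ∈ r ∨ ZFSet.pair b a ∈ r)) ∧
  (∀ y ∈ S, (∀ z ∈ y, z ∈ x) → y ≠ ∅ → ∃ m ∈ y, ∀ z ∈ y, ZFSet.pair z m ∉ r)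

/-- `S` is a transitive model of ZFC⁻, i.e. of ZFC stated with the Replacement Scheme and
the Well-Ordering Theorem but without the Power Set Axiom.  (Extensionality and Foundation
are automatic for transitive classes of ZF-sets.) -/
def ModelsZFCminus (S : Set ZFSet) : Prop :=
  IsTransClass S ∧
  (∅ : ZFSet) ∈ S ∧
  (∀ x ∈ S, ∀ y ∈ S, ({x, y} : ZFSet) ∈ S) ∧
  (∀ x ∈ S, (ZFSet.sUnion x : ZFSet) ∈ S) ∧
  ZFSet.omega ∈ S ∧
  (∀ (n : ℕ) (φ : setL.BoundedFormula Empty (n + 1)) (p : Fin n → ZFSet),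
    (∀ i, p i ∈ S) → ∀ a ∈ S, ∃ b ∈ S, ∀ y, y ∈ b ↔ (y ∈ a ∧ ZSat S φ (Fin.snoc p y))) ∧
  (∀ (n : ℕ) (φ : setL.BoundedFormula Empty (n + 2)) (p : Fin n → ZFSet),
    (∀ i, p i ∈ S) → ∀ a ∈ S,
      (∀ x ∈ a, ∃! y, y ∈ S ∧ ZSat S φ (Fin.snoc (Fin.snoc p x) y)) →
      ∃ b ∈ S, ∀ y, y ∈ b ↔ ∃ x ∈ a, y ∈ S ∧ ZSat S φ (Fin.snoc (Fin.snoc p x) y)) ∧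
  (∀ x ∈ S, ∃ r ∈ S, WellOrders S r x)

/-- `S` is a transitive model of ZFC. -/
def ModelsZFC (S : Set ZFSet) : Prop :=
  ModelsZFCminus S ∧ ∀ x ∈ S, ∃ p ∈ S, ∀ y, y ∈ p ↔ (y ∈ S ∧ y ⊆ x)

/-- `f` is (the graph of) a surjection of `a` onto `b`. -/
def SurjFun (f a b : ZFSet) : Prop :=
  ZFSet.IsFunc a b f ∧ ∀ y ∈ b, ∃ x ∈ a, ZFSet.pair x y ∈ f

/-- `f` is (the graph of) an injection of `a` into `b`. -/
def InjFun (f a b : ZFSet) : Prop :=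
  ZFSet.IsFunc a b f ∧ ∀ x ∈ a, ∀ x' ∈ a, ∀ y, ZFSet.pair x y ∈ f → ZFSet.pair x' y ∈ f → x = x'

/-- `f` is (the graph of) a cofinal function from `β` into the ordinal `α`. -/
def CofinalFun (f β α : ZFSet) : Prop :=
  ZFSet.IsFunc β α f ∧ ∀ ξ ∈ α, ∃ η ∈ β, ∃ ζ, ZFSet.pair η ζ ∈ f ∧ (ξ ∈ ζ ∨ ξ = ζ)

/-- `μ = cof(α)` as computed inside the class `S` (for `S = Set.univ`, the true cofinality). -/
def IsCofOf (S : Set ZFSet) (α μ : ZFSet) : Prop :=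
  μ ∈ S ∧ μ.IsOrdinal ∧ (∃ f ∈ S, CofinalFun f μ α) ∧
  ∀ ν ∈ S, ZFSet.IsOrdinal ν → (∃ f ∈ S, CofinalFun f ν α) → μ ⊆ ν

/-- `κ` is a cardinal from the point of view of the class `S`
(for `S = Set.univ`, a true cardinal). -/
def IsCardIn (S : Set ZFSet) (κ : ZFSet) : Prop :=
  κ.IsOrdinal ∧ ∀ α ∈ κ, ∀ f ∈ S, ¬ SurjFun f α κ

/-- `μ` is an (infinite) regular cardinal from the point of view of the class `S`. -/
def IsRegularIn (S : Set ZFSet) (μ : ZFSet) : Prop :=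
  ZFSet.omega ⊆ μ ∧ IsCardIn S μ ∧ IsCofOf S μ μ

/-- `ν = μ⁺`, the cardinal successor of `μ`, as computed in the class `S`. -/
def CardSuccIn (S : Set ZFSet) (μ ν : ZFSet) : Prop :=
  ν ∈ S ∧ IsCardIn S ν ∧ μ ∈ ν ∧ ∀ ξ ∈ S, IsCardIn S ξ → μ ∈ ξ → ν ⊆ ξ

/-- `μ` is the largest cardinal of the model `S`. -/
def IsLargestCardIn (S : Set ZFSet) (μ : ZFSet) : Prop :=
  μ ∈ S ∧ IsCardIn S μ ∧ ∀ x ∈ S, IsCardIn S x → x ⊆ μ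

/-- `α = sup A`, for `A` a collection of ordinals: `α` is the least ordinal above all of them. -/
def IsSupOf (α : ZFSet) (A : Set ZFSet) : Prop :=
  α.IsOrdinal ∧ (∀ a ∈ A, a ⊆ α) ∧ ∀ β : ZFSet, β.IsOrdinal → (∀ a ∈ A, a ⊆ β) → α ⊆ β

/-- `π` is an elementary embedding (for the language of set theory) from the class `S`
into the class `T`. -/
def IsElem (S T : Set ZFSet) (π : ZFSet → ZFSet) : Prop :=
  (∀ x ∈ S, π x ∈ T) ∧
  ∀ (n : ℕ) (φ : setL.BoundedFormula Empty n) (v : Fin n → ZFSet),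
    (∀ i, v i ∈ S) → (ZSat S φ v ↔ ZSat T φ (fun i => π (v i)))

/-!
Replacement in `M` puts into `M` the graph of every function on a set of `M` that is definable over
`M`, in particular restrictions and compositions of functions of `M`.

Suppose `F : μ → α` in `M` witnesses `cof^M(α) = μ`, and `G : β → α` with `β < μ` were cofinal in
`V`. Send `η < β` to some `H η < μ` with `G η ≤ F (H η)`. By regularity `H` is bounded by some
`δ < μ`, so `F ↾ δ`, which lies in `M`, is cofinal in `α`, contradicting `cof^M(α) = μ`.

If `cof(α) = μ`, then `cof^M(α) ≥ μ` because `M` has fewer functions, and `cof^M(α) ≤ μ` because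
the `M`-cardinality of `α` is at most `μ`, so that `M` contains a surjection of `μ` onto `α`.
-/

open ZFSet

attribute [local instance] Classical.allZFSetDefinable

section Formulas

variable {S : Set ZFSet} {n : ℕ}

/-- A class of sets as a first-order structure with true membership, which makes Mathlib's
`BoundedFormula.Realize` available in place of `ZSat`. -/
instance membershipStructure (S : Set ZFSet) : setL.Structure S where
  funMap f := f.elim
  RelMap | SetLRel.mem, v => (v 0 : ZFSet) ∈ (v 1 : ZFSet)

theorem tval_coe (t : setL.Term (Empty ⊕ Fin n)) (v : Fin n → S) :
    tval (Subtype.val ∘ v) t = t.realize (Sum.elim default v) := by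
  match t with
  | .var (Sum.inl e) => exact e.elim
  | .var (Sum.inr _) => rfl
  | .func f _ => exact f.elim

theorem zSat_iff_realize (φ : setL.BoundedFormula Empty n) (v : Fin n → S) :
    ZSat S φ (Subtype.val ∘ v) ↔ φ.Realize default v := by
  induction φ with
  | falsum => rfl
  | equal t u => simp only [ZSat, tval_coe, BoundedFormula.Realize, Subtype.coe_inj]
  | rel R ts =>
    cases R
    simp only [ZSat, tval_coe]
    rfl
  | imp φ ψ hφ hψ => simp only [ZSat, hφ, hψ, BoundedFormula.realize_imp]
  | all φ hφ =>
    simp only [ZSat, BoundedFormula.realize_all, ← hφ, Fin.comp_snoc, Subtype.forall]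

/-- The formula `vᵢ ∈ vⱼ`. -/
def memFormula (i j : Fin n) : setL.BoundedFormula Empty n :=
  Relations.boundedFormula₂ (L := setL) SetLRel.mem (&i) (&j)

@[simp]
theorem realize_memFormula (i j : Fin n) (v : Fin n → S) :
    (memFormula i j).Realize default v ↔ (v i : ZFSet) ∈ (v j : ZFSet) :=
  BoundedFormula.realize_rel₂

/-- The formula `vₖ = {vᵢ, vⱼ}`. -/
def unorderedPairFormula (i j k : Fin n) : setL.BoundedFormula Empty n :=
  ∀' (memFormula (Fin.last n) k.castSucc ⇔
    (&(Fin.last n) =' &i.castSucc ⊔ &(Fin.last n) =' &j.castSucc))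

theorem IsTransClass.realize_unorderedPairFormula (hS : IsTransClass S) (i j k : Fin n)
    (v : Fin n → S) :
    (unorderedPairFormula i j k).Realize default v ↔ (v k : ZFSet) = {↑(v i), ↑(v j)} := by
  rw [ZFSet.ext_iff]
  simp only [unorderedPairFormula, BoundedFormula.realize_all, BoundedFormula.realize_iff,
    BoundedFormula.realize_sup, BoundedFormula.realize_bdEqual, realize_memFormula,
    Function.comp_apply, Term.realize_var, Sum.elim_inr, Fin.snoc_last, Fin.snoc_castSucc,
    Subtype.forall, Subtype.ext_iff, mem_pair]
  refine ⟨fun h z => ⟨fun hz => (h z (hS _ (v k).2 z hz)).1 hz, ?_⟩, fun h z _ => h z⟩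
  rintro (rfl | rfl)
  · exact (h _ (v i).2).2 (Or.inl rfl)
  · exact (h _ (v j).2).2 (Or.inr rfl)

end Formulas

/-- `S` is a transitive model of Pairing and Replacement, the part of ZFC⁻ under which `S` contains
the graphs of all functions on its sets that are definable over `S`. -/
structure IsReplacementModel (S : Set ZFSet) : Prop where
  isTransClass : IsTransClass S
  unorderedPair_mem : ∀ x ∈ S, ∀ y ∈ S, ({x, y} : ZFSet) ∈ S
  replacement : ∀ (n : ℕ) (φ : setL.BoundedFormula Empty (n + 2)) (p : Fin n → ZFSet),
    (∀ i, p i ∈ S) → ∀ a ∈ S,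
      (∀ x ∈ a, ∃! y, y ∈ S ∧ ZSat S φ (Fin.snoc (Fin.snoc p x) y)) →
      ∃ b ∈ S, ∀ y, y ∈ b ↔ ∃ x ∈ a, y ∈ S ∧ ZSat S φ (Fin.snoc (Fin.snoc p x) y)

theorem ModelsZFCminus.isReplacementModel {S : Set ZFSet} (hS : ModelsZFCminus S) :
    IsReplacementModel S :=
  let ⟨transClass, _, pairing, _, _, _, replacement, _⟩ := hS
  ⟨transClass, pairing, replacement⟩

section OrderedPairs

variable {S : Set ZFSet} {n : ℕ} {x y : ZFSet}

theorem IsTransClass.of_pair_mem (hS : IsTransClass S) (h : pair x y ∈ S) : x ∈ S ∧ y ∈ S := by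
  have hxy : ({x, y} : ZFSet) ∈ S := hS _ h _ (mem_pair.2 (Or.inr rfl))
  exact ⟨hS _ hxy _ (mem_pair.2 (Or.inl rfl)), hS _ hxy _ (mem_pair.2 (Or.inr rfl))⟩

theorem pair_eq_unorderedPair : pair x y = {{x, x}, {x, y}} := by
  rw [pair, pair_eq_singleton]

theorem IsReplacementModel.pair_mem (hS : IsReplacementModel S) (hx : x ∈ S) (hy : y ∈ S) :
    pair x y ∈ S := by
  rw [pair_eq_unorderedPair]
  exact hS.unorderedPair_mem _ (hS.unorderedPair_mem x hx x hx) _ (hS.unorderedPair_mem x hx y hy)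

/-- The formula `vₖ = (vᵢ, vⱼ)`, for Kuratowski pairs. -/
def pairFormula (i j k : Fin n) : setL.BoundedFormula Empty n :=
  ∃' ∃' (unorderedPairFormula i.castSucc.castSucc i.castSucc.castSucc (Fin.last n).castSucc ⊓
    unorderedPairFormula i.castSucc.castSucc j.castSucc.castSucc (Fin.last (n + 1)) ⊓
    unorderedPairFormula (Fin.last n).castSucc (Fin.last (n + 1)) k.castSucc.castSucc)

theorem IsReplacementModel.realize_pairFormula (hS : IsReplacementModel S) (i j k : Fin n)
    (v : Fin n → S) :
    (pairFormula i j k).Realize default v ↔ (v k : ZFSet) = pair (v i) (v j) := by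
  simp only [pairFormula, BoundedFormula.realize_ex, BoundedFormula.realize_inf,
    hS.isTransClass.realize_unorderedPairFormula, Fin.snoc_last, Fin.snoc_castSucc,
    Subtype.exists, pair_eq_unorderedPair]
  constructor
  · rintro ⟨_, _, _, _, ⟨rfl, rfl⟩, h⟩
    exact h
  · intro h
    exact ⟨_, hS.unorderedPair_mem _ (v i).2 _ (v i).2,
      _, hS.unorderedPair_mem _ (v i).2 _ (v j).2, ⟨rfl, rfl⟩, h⟩

/-- The formula `(vᵢ, vⱼ) ∈ vₖ`. -/
def pairMemFormula (i j k : Fin n) : setL.BoundedFormula Empty n :=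
  ∃' (pairFormula i.castSucc j.castSucc (Fin.last n) ⊓ memFormula (Fin.last n) k.castSucc)

theorem IsReplacementModel.realize_pairMemFormula (hS : IsReplacementModel S) (i j k : Fin n)
    (v : Fin n → S) :
    (pairMemFormula i j k).Realize default v ↔ pair (v i) (v j) ∈ (v k : ZFSet) := by
  simp only [pairMemFormula, BoundedFormula.realize_ex, BoundedFormula.realize_inf,
    hS.realize_pairFormula, realize_memFormula, Fin.snoc_last, Fin.snoc_castSucc, Subtype.exists]
  constructor
  · rintro ⟨_, _, rfl, h⟩
    exact h
  · intro h
    exact ⟨_, hS.pair_mem (v i).2 (v j).2, rfl, h⟩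

end OrderedPairs

section Graphs

variable {S : Set ZFSet} {a b c f x y : ZFSet} {F G : ZFSet → ZFSet}

theorem pair_mem_map_iff : pair x y ∈ map F a ↔ x ∈ a ∧ y = F x := by
  simp only [mem_map, pair_inj]
  constructor
  · rintro ⟨_, hx, rfl, rfl⟩
    exact ⟨hx, rfl⟩
  · rintro ⟨hx, rfl⟩
    exact ⟨x, hx, rfl, rfl⟩

theorem exists_eq_map_of_isFunc (hf : IsFunc a c f) : ∃ F : ZFSet → ZFSet, f = map F a := by
  choose! F hF hF_unique using hf.2
  refine ⟨F, ZFSet.ext fun z => ⟨fun hz => ?_, fun hz => ?_⟩⟩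
  · obtain ⟨x, hx, y, -, rfl⟩ := mem_prod.1 (hf.1 hz)
    exact pair_mem_map_iff.2 ⟨hx, hF_unique x hx y hz⟩
  · obtain ⟨x, hx, rfl⟩ := mem_map.1 hz
    exact hF x hx

theorem surjFun_map_iff :
    SurjFun (map F a) a b ↔ Set.MapsTo F a b ∧ Set.SurjOn F a b := by
  refine and_congr map_isFunc (forall₂_congr fun y _ => exists_congr fun x => ?_)
  rw [pair_mem_map_iff, SetLike.mem_coe]
  exact ⟨fun ⟨hx, _, hy⟩ => ⟨hx, hy.symm⟩, fun ⟨hx, hy⟩ => ⟨hx, hx, hy.symm⟩⟩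

theorem cofinalFun_map_iff (hb : b.IsOrdinal) :
    CofinalFun (map F a) a b ↔ Set.MapsTo F a b ∧ ∀ ξ ∈ b, ∃ η ∈ a, ξ ⊆ F η := by
  rw [CofinalFun, map_isFunc]
  refine and_congr_right fun hF => forall₂_congr fun ξ hξ => exists_congr fun η =>
    and_congr_right fun hη => ?_
  rw [(hb.mem hξ).subset_iff_eq_or_mem (hb.mem (hF η hη)), or_comm]
  simp only [pair_mem_map_iff, hη, true_and, exists_eq_left]

namespace IsReplacementModel

theorem exists_image (hS : IsReplacementModel S) {n : ℕ} (φ : setL.BoundedFormula Empty (n + 2))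
    (p : Fin n → S) (ha : a ∈ S) (hF : ∀ x ∈ a, F x ∈ S)
    (hφ : ∀ x y : S, ↑x ∈ a →
      (φ.Realize default (Fin.snoc (Fin.snoc p x : Fin (n + 1) → S) y) ↔ (y : ZFSet) = F x)) :
    ∃ b ∈ S, ∀ y, y ∈ b ↔ ∃ x ∈ a, F x = y := by
  have zSat_iff : ∀ x ∈ a, ∀ y ∈ S,
      (ZSat S φ (Fin.snoc (Fin.snoc (Subtype.val ∘ p) x : Fin (n + 1) → ZFSet) y) ↔ y = F x) := by
    intro x hx y hy
    have := hφ ⟨x, hS.isTransClass a ha x hx⟩ ⟨y, hy⟩ hx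
    rwa [← zSat_iff_realize, Fin.comp_snoc, Fin.comp_snoc] at this
  obtain ⟨b, hbS, hb⟩ := hS.replacement n φ (Subtype.val ∘ p) (fun i => (p i).2) a ha fun x hx =>
    ⟨F x, ⟨hF x hx, (zSat_iff x hx _ (hF x hx)).2 rfl⟩,
      fun y hy => (zSat_iff x hx y hy.1).1 hy.2⟩
  refine ⟨b, hbS, fun y => (hb y).trans (exists_congr fun x => and_congr_right fun hx => ⟨?_, ?_⟩)⟩
  · rintro ⟨hy, hφy⟩
    exact ((zSat_iff x hx y hy).1 hφy).symm
  · rintro rfl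
    exact ⟨hF x hx, (zSat_iff x hx _ (hF x hx)).2 rfl⟩

theorem map_mem (hS : IsReplacementModel S) {n : ℕ} (φ : setL.BoundedFormula Empty (n + 2))
    (p : Fin n → S) (ha : a ∈ S) (hF : ∀ x ∈ a, F x ∈ S)
    (hφ : ∀ x y : S, ↑x ∈ a →
      (φ.Realize default (Fin.snoc (Fin.snoc p x : Fin (n + 1) → S) y) ↔ (y : ZFSet) = F x)) :
    map F a ∈ S := by
  -- `∃ y, φ(p, x, y) ∧ z = (x, y)`, with the variables ordered as `p, x, z, y`
  let graphFormula : setL.BoundedFormula Empty (n + 2) :=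
    ∃' (φ.liftAt 1 (n + 1) ⊓
      pairFormula (Fin.last n).castSucc.castSucc (Fin.last (n + 2)) (Fin.last (n + 1)).castSucc)
  have skip_z (x z y : S) :
      (Fin.snoc (Fin.snoc (Fin.snoc p x : Fin (n + 1) → S) z : Fin (n + 2) → S) y :
        Fin (n + 3) → S) ∘
          (fun i : Fin (n + 2) => if (i : ℕ) < n + 1 then i.castSucc else i.succ) =
        Fin.snoc (Fin.snoc p x : Fin (n + 1) → S) y := by
    funext i
    refine Fin.lastCases ?_ (fun j => ?_) i
    · simp
    · simp [Nat.le_of_lt_succ j.isLt]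
  have realize_graphFormula (x z : S) (hx : ↑x ∈ a) :
      graphFormula.Realize default (Fin.snoc (Fin.snoc p x : Fin (n + 1) → S) z) ↔
        (z : ZFSet) = pair x (F x) := by
    simp only [graphFormula, BoundedFormula.realize_ex, BoundedFormula.realize_inf,
      BoundedFormula.realize_liftAt_one (Nat.le_succ (n + 1)), skip_z, hφ x _ hx,
      hS.realize_pairFormula, Fin.snoc_last, Fin.snoc_castSucc, Subtype.exists]
    constructor
    · rintro ⟨_, _, rfl, h⟩
      exact h
    · intro h
      exact ⟨F x, hF x hx, rfl, h⟩
  obtain ⟨b, hb, mem_b⟩ := hS.exists_image graphFormula p ha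
    (fun x hx => hS.pair_mem (hS.isTransClass a ha x hx) (hF x hx)) realize_graphFormula
  have map_eq : map F a = b := ZFSet.ext fun z => mem_map.trans (mem_b z).symm
  exact map_eq ▸ hb

theorem mem_of_map_mem (hS : IsReplacementModel S) (hF : map F a ∈ S) (hx : x ∈ a) : F x ∈ S :=
  (hS.isTransClass.of_pair_mem
    (hS.isTransClass _ hF _ (pair_mem_map_iff.2 ⟨hx, rfl⟩))).2

theorem map_id_mem (hS : IsReplacementModel S) (ha : a ∈ S) : map id a ∈ S :=
  hS.map_mem (n := 0) (&1 =' &0) Fin.elim0 ha (hS.isTransClass a ha) fun x y _ => by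
    simp [Fin.snoc, Subtype.ext_iff]

theorem map_mem_of_subset (hS : IsReplacementModel S) (hF : map F a ∈ S) (hb : b ∈ S)
    (hba : b ⊆ a) : map F b ∈ S :=
  hS.map_mem (pairMemFormula 1 2 0) ![⟨_, hF⟩] hb (fun _ hx => hS.mem_of_map_mem hF (hba hx))
    fun x y hx => by
      simp [hS.realize_pairMemFormula, pair_mem_map_iff, -mem_map, hba hx]

theorem map_comp_mem (hS : IsReplacementModel S) (ha : a ∈ S) (hG : map G a ∈ S)
    (hF : map F b ∈ S) (hGab : Set.MapsTo G a b) : map (F ∘ G) a ∈ S :=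
  hS.map_mem (F := F ∘ G) (∃' (pairMemFormula 2 4 0 ⊓ pairMemFormula 4 3 1)) ![⟨_, hG⟩, ⟨_, hF⟩] ha
    (fun _ hx => hS.mem_of_map_mem (F := F) hF (hGab hx)) fun x y hx => by
      have hGb : G x ∈ b := hGab hx
      simp [hS.realize_pairMemFormula, pair_mem_map_iff, -mem_map, hx, hGb,
        hS.mem_of_map_mem hG hx]

open scoped Classical in
theorem map_ite_mem (hS : IsReplacementModel S) (ha : a ∈ S) (hb : b ∈ S) (hF : map F b ∈ S)
    (hc : c ∈ S) : map (fun x => if x ∈ b then F x else c) a ∈ S :=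
  hS.map_mem (pairMemFormula 3 4 0 ⊔ (∼(memFormula 3 1) ⊓ &4 =' &2)) ![⟨_, hF⟩, ⟨b, hb⟩, ⟨c, hc⟩] ha
    (fun x _ => by split_ifs with hx; exacts [hS.mem_of_map_mem hF hx, hc]) fun x y _ => by
      by_cases hx : (x : ZFSet) ∈ b <;>
        simp [hS.realize_pairMemFormula, pair_mem_map_iff, -mem_map, hx, Subtype.ext_iff]

end IsReplacementModel

end Graphs

section Cardinality

variable {S : Set ZFSet} {f g α β γ μ : ZFSet}

theorem IsReplacementModel.exists_surjFun_comp (hS : IsReplacementModel S) (hγ : γ ∈ S)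
    (hg : g ∈ S) (hf : f ∈ S) (hgs : SurjFun g γ β) (hfs : SurjFun f β α) :
    ∃ k ∈ S, SurjFun k γ α := by
  obtain ⟨G, rfl⟩ := exists_eq_map_of_isFunc hgs.1
  obtain ⟨F, rfl⟩ := exists_eq_map_of_isFunc hfs.1
  rw [surjFun_map_iff] at hgs hfs
  exact ⟨_, hS.map_comp_mem hγ hg hf hgs.1,
    surjFun_map_iff.2 ⟨hfs.1.comp hgs.1, hfs.2.comp hgs.2⟩⟩

theorem IsReplacementModel.exists_surjFun_of_subset (hS : IsReplacementModel S) (hμ : μ ∈ S)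
    (hβ : β ∈ S) (hf : f ∈ S) (hfs : SurjFun f β α) (hβμ : β ⊆ μ) (hα : α.Nonempty) :
    ∃ k ∈ S, SurjFun k μ α := by
  classical
  obtain ⟨F, rfl⟩ := exists_eq_map_of_isFunc hfs.1
  obtain ⟨hFα, hF_surj⟩ := surjFun_map_iff.1 hfs
  obtain ⟨c, hc⟩ := hα
  obtain ⟨d, hd, rfl⟩ := hF_surj hc
  refine ⟨_, hS.map_ite_mem hμ hβ hf (hS.mem_of_map_mem hf hd), surjFun_map_iff.2 ⟨?_, ?_⟩⟩
  · intro x _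
    dsimp only
    split_ifs with hx
    exacts [hFα hx, hc]
  · intro y hy
    obtain ⟨x, hx, rfl⟩ := hF_surj hy
    exact ⟨x, hβμ hx, if_pos hx⟩

theorem IsReplacementModel.exists_isCardIn_surjFun (hS : IsReplacementModel S) (hα : α ∈ S)
    (hαo : α.IsOrdinal) : ∃ κ ∈ S, IsCardIn S κ ∧ ∃ f ∈ S, SurjFun f κ α := by
  let surjecting : Set ZFSet := {β | β ∈ S ∧ β.IsOrdinal ∧ ∃ f ∈ S, SurjFun f β α}
  have α_mem : α ∈ surjecting :=
    ⟨hα, hαo, _, hS.map_id_mem hα, surjFun_map_iff.2 ⟨Set.mapsTo_id _, Set.surjOn_id _⟩⟩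
  obtain ⟨κ, ⟨hκ, hκo, f, hf, hfs⟩, κ_minimal⟩ := mem_wf.has_min surjecting ⟨α, α_mem⟩
  refine ⟨κ, hκ, ⟨hκo, fun γ hγκ g hg hgs => ?_⟩, f, hf, hfs⟩
  have hγ : γ ∈ S := hS.isTransClass κ hκ γ hγκ
  exact κ_minimal γ ⟨hγ, hκo.mem hγκ, hS.exists_surjFun_comp hγ hg hf hgs hfs⟩ hγκ

theorem IsLargestCardIn.exists_surjFun (hμ : IsLargestCardIn S μ) (hS : IsReplacementModel S)
    (hα : α ∈ S) (hαo : α.IsOrdinal) (hα_ne : α.Nonempty) : ∃ f ∈ S, SurjFun f μ α := by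
  obtain ⟨κ, hκ, κ_card, f, hf, hfs⟩ := hS.exists_isCardIn_surjFun hα hαo
  exact hS.exists_surjFun_of_subset hμ.1 hκ hf hfs (hμ.2.2 κ hκ κ_card) hα_ne

end Cardinality

section Cofinality

variable {S T : Set ZFSet} {f α β μ : ZFSet} {F : ZFSet → ZFSet}

theorem SurjFun.cofinalFun (hf : SurjFun f β α) : CofinalFun f β α :=
  ⟨hf.1, fun ξ hξ => let ⟨η, hη, h⟩ := hf.2 ξ hξ; ⟨η, hη, ξ, h, Or.inr rfl⟩⟩

theorem CofinalFun.nonempty (hf : CofinalFun f β α) (hβ : β.Nonempty) : α.Nonempty := by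
  obtain ⟨x, hx⟩ := hβ
  obtain ⟨y, hy, -⟩ := hf.1.2 x hx
  exact ⟨y, (pair_mem_prod.1 (hf.1.1 hy)).2⟩

namespace IsCofOf

theorem exists_forall_mem (h : IsCofOf S α μ) (hα : α.IsOrdinal) (hβμ : β ∈ μ) (hβ : β ∈ S)
    (hF : map F β ∈ S) (hFα : Set.MapsTo F β α) : ∃ δ ∈ α, ∀ η ∈ β, F η ∈ δ := by
  by_contra! unbounded
  have cofinal : CofinalFun (map F β) β α := by
    refine (cofinalFun_map_iff hα).2 ⟨hFα, fun ξ hξ => ?_⟩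
    obtain ⟨η, hη, hηξ⟩ := unbounded ξ hξ
    exact ⟨η, hη, ((hα.mem (hFα hη)).notMem_iff_subset (hα.mem hξ)).1 hηξ⟩
  exact not_subset_of_mem hβμ (h.2.2.2 β hβ (h.2.1.mem hβμ) ⟨_, hF, cofinal⟩)

theorem mono (h : IsCofOf T α μ) (hST : S ⊆ T) (hμ : μ ∈ S) (hf : ∃ f ∈ S, CofinalFun f μ α) :
    IsCofOf S α μ :=
  ⟨hμ, h.2.1, hf, fun β hβ hβo ⟨g, hg, hg_cofinal⟩ =>
    h.2.2.2 β (hST hβ) hβo ⟨g, hST hg, hg_cofinal⟩⟩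

theorem univ_of_regular (h : IsCofOf S α μ) (hS : IsReplacementModel S)
    (hμ : IsCofOf Set.univ μ μ) (hα : α.IsOrdinal) : IsCofOf Set.univ α μ := by
  have ⟨hμS, hμo, ⟨f, hf, f_cofinal⟩, _⟩ := h
  refine ⟨trivial, hμo, ⟨f, trivial, f_cofinal⟩, ?_⟩
  rintro β - hβo ⟨g, -, g_cofinal⟩
  obtain ⟨F, rfl⟩ := exists_eq_map_of_isFunc f_cofinal.1
  obtain ⟨G, rfl⟩ := exists_eq_map_of_isFunc g_cofinal.1
  obtain ⟨hFα, F_cofinal⟩ := (cofinalFun_map_iff hα).1 f_cofinal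
  obtain ⟨hGα, G_cofinal⟩ := (cofinalFun_map_iff hα).1 g_cofinal
  by_contra hμβ
  have hβμ : β ∈ μ := (hμo.not_subset_iff_mem hβo).1 hμβ
  have G_le_F : ∀ η ∈ β, ∃ ξ ∈ μ, G η ⊆ F ξ := fun η hη => F_cofinal _ (hGα hη)
  choose! H hHμ G_le_FH using G_le_F
  obtain ⟨δ, hδμ, hHδ⟩ := hμ.exists_forall_mem hμo hβμ trivial trivial hHμ
  have hδ_sub : δ ⊆ μ := hμo.subset_of_mem hδμ
  have hδ : δ ∈ S := hS.isTransClass μ hμS δ hδμ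
  obtain ⟨ε, hεα, hFε⟩ := h.exists_forall_mem hα hδμ hδ (hS.map_mem_of_subset hf hδ hδ_sub)
    fun _ hx => hFα (hδ_sub hx)
  obtain ⟨η, hη, ε_le_G⟩ := G_cofinal ε hεα
  exact not_subset_of_mem (hFε _ (hHδ η hη)) (ε_le_G.trans (G_le_FH η hη))

end IsCofOf

end Cofinality

theorem cofinality_lemma_general {S : Set ZFSet} {μ α : ZFSet} (hμ : IsRegularIn Set.univ μ)
    (hS : IsReplacementModel S) (hlc : IsLargestCardIn S μ) (hα : α ∈ S) (hαo : α.IsOrdinal) :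
    IsCofOf S α μ ↔ IsCofOf Set.univ α μ := by
  refine ⟨fun h => h.univ_of_regular hS hμ.2.2 hαo, fun h => ?_⟩
  obtain ⟨f, -, f_cofinal⟩ := h.2.2.1
  have hα_ne : α.Nonempty := f_cofinal.nonempty ⟨∅, hμ.1 omega_zero⟩
  obtain ⟨k, hk, hks⟩ := hlc.exists_surjFun hS hα hαo hα_ne
  exact h.mono (Set.subset_univ S) hlc.1 ⟨k, hk, hks.cofinalFun⟩

/-- Let `μ` be a regular cardinal and `M` a transitive model of ZFC⁻ such
that `o(M) = μ⁺` and `μ` is the largest cardinal of `M`.  Then for any `α < μ⁺`: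
`cof^M(α) = μ` iff `cof(α) = μ`. -/
theorem cofinality_lemma (μ ν M : ZFSet)
    (hμ : IsRegularIn Set.univ μ)
    (hM : ModelsZFCminus M.toSet)
    (hν : CardSuccIn Set.univ μ ν)
    (hoM : ∀ x : ZFSet, (x ∈ M ∧ x.IsOrdinal) ↔ x ∈ ν)
    (hlc : IsLargestCardIn M.toSet μ) :
    ∀ α ∈ ν, (IsCofOf M.toSet α μ ↔ IsCofOf Set.univ α μ) := by
  intro α hα
  obtain ⟨hαM, hαo⟩ := (hoM α).2 hα
  exact cofinality_lemma_general hμ hM.isReplacementModel hlc hαM hαo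
end

section
/- Let μ be a regular cardinal and let M, N be transitive models of ZFC⁻ such that o(M) = o(N) = μ⁺ and μ is the largest cardinal of M. Suppose π : M → N is elementary and π is continuous at μ. Then the set of fixed points of π is a member of the μ-club filter C_{μ,μ⁺} on μ⁺. -/
/- ## A framework for transitive class/set models of fragments of ZFC,
     inside the universe `ZFSet` of ZF sets. -/

open FirstOrder FirstOrder.Language

/-- `C` is a `μ`-club in `ν = μ⁺`: a cofinal subset of `ν` closed under (suprema of)
increasing `μ`-sequences. -/
def MuClub (μ ν : ZFSet) (C : Set ZFSet) : Prop :=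
  (∀ x ∈ C, x ∈ ν) ∧
  (∀ β ∈ ν, ∃ γ ∈ C, β ∈ γ ∨ β = γ) ∧
  (∀ s : ZFSet → ZFSet,
    (∀ ξ ∈ μ, s ξ ∈ C) →
    (∀ ξ η : ZFSet, ξ ∈ η → η ∈ μ → s ξ ∈ s η) →
    ∀ γ ∈ ν, IsSupOf γ {y | ∃ ξ ∈ μ, y = s ξ} → γ ∈ C)

/-- The `μ`-club filter `C_{μ,μ⁺}` on `ν = μ⁺`: the filter generated by the cofinal subsets
of `ν` which are closed under increasing `μ`-sequences. -/
def muClubFilter (μ ν : ZFSet) : Filter ZFSet := Filter.generate {C | MuClub μ ν C}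

/-!
Since `μ` is the largest cardinal of `M`, every ordinal `γ` of `M` is the image in `M` of a subset
of `μ`, under some `f`. Suppose `γ` is the supremum of an increasing `μ`-sequence `s` with
`π (s ξ) ≤ γ`. By regularity, `f` maps each `β < μ` into some `s ξ`, so by elementarity `π f` maps
`π β` into `π (s ξ) ≤ γ`. By continuity the `π β` exhaust `π μ`, whose image under `π f` is `π γ`;
hence `π γ ≤ γ`. Fixed points `s ξ` satisfy the condition on `s` trivially, which gives
`μ`-closedness, and as `μ⁺` is regular and closed under `π` such `γ` are cofinal in `μ⁺`.
-/

universe u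

/-! ### Absoluteness and elementarity -/

/-- `P` is defined by one and the same formula of set theory in every transitive class. Such
predicates are preserved by elementary embeddings and may be used in instances of Replacement. -/
def IsAbsolute {n : ℕ} (P : (Fin n → ZFSet.{u}) → Prop) : Prop :=
  ∃ φ : setL.BoundedFormula Empty n, ∀ S : Set ZFSet.{u}, IsTransClass S →
    ∀ v : Fin n → ZFSet.{u}, (∀ i, v i ∈ S) → (ZSat S φ v ↔ P v)

theorem forall_snoc_mem {S : Set ZFSet.{u}} {n : ℕ} {v : Fin n → ZFSet.{u}} (hv : ∀ i, v i ∈ S)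
    {x : ZFSet.{u}} (hx : x ∈ S) : ∀ k, Fin.snoc (α := fun _ => ZFSet.{u}) v x k ∈ S :=
  Fin.lastCases (by rwa [Fin.snoc_last]) fun k => by rw [Fin.snoc_castSucc]; exact hv k

namespace IsAbsolute

variable {n : ℕ} {P Q : (Fin n → ZFSet.{u}) → Prop}

theorem congr (hP : IsAbsolute P) (h : ∀ v, Q v ↔ P v) : IsAbsolute Q := by
  obtain rfl : Q = P := funext fun v => propext (h v)
  exact hP

theorem mem (i j : Fin n) : IsAbsolute fun v : Fin n → ZFSet.{u} => v i ∈ v j :=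
  ⟨.rel SetLRel.mem ![.var (Sum.inr i), .var (Sum.inr j)], fun _ _ _ _ => Iff.rfl⟩

theorem eq (i j : Fin n) : IsAbsolute fun v : Fin n → ZFSet.{u} => v i = v j :=
  ⟨.equal (.var (Sum.inr i)) (.var (Sum.inr j)), fun _ _ _ _ => Iff.rfl⟩

theorem imp (hP : IsAbsolute P) (hQ : IsAbsolute Q) : IsAbsolute fun v => P v → Q v := by
  obtain ⟨φ, hφ⟩ := hP
  obtain ⟨ψ, hψ⟩ := hQ
  exact ⟨.imp φ ψ, fun S hS v hv => imp_congr (hφ S hS v hv) (hψ S hS v hv)⟩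

theorem not (hP : IsAbsolute P) : IsAbsolute fun v => ¬ P v :=
  hP.imp ⟨.falsum, fun _ _ _ _ => Iff.rfl⟩

theorem or (hP : IsAbsolute P) (hQ : IsAbsolute Q) : IsAbsolute fun v => P v ∨ Q v :=
  (hP.not.imp hQ).congr fun _ => or_iff_not_imp_left

theorem and (hP : IsAbsolute P) (hQ : IsAbsolute Q) : IsAbsolute fun v => P v ∧ Q v :=
  (hP.imp hQ.not).not.congr fun _ => by tauto

theorem ball (i : Fin n) {R : (Fin n → ZFSet.{u}) → ZFSet.{u} → Prop}
    (hR : IsAbsolute fun w : Fin (n + 1) → ZFSet.{u} =>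
      R (fun k => w k.castSucc) (w (Fin.last n))) :
    IsAbsolute fun v => ∀ x ∈ v i, R v x := by
  obtain ⟨φ, hφ⟩ := (mem (Fin.last n) i.castSucc).imp hR
  refine ⟨.all φ, fun S hS v hv => ?_⟩
  have hsat : ∀ x ∈ S, (ZSat S φ (Fin.snoc v x) ↔ (x ∈ v i → R v x)) := fun x hx => by
    rw [hφ S hS _ (forall_snoc_mem hv hx)]
    simp only [Fin.snoc_last, Fin.snoc_castSucc]
  exact ⟨fun h x hx => (hsat x (hS _ (hv i) x hx)).1 (h x (hS _ (hv i) x hx)) hx,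
    fun h x hx => (hsat x hx).2 (h x)⟩

theorem bex (i : Fin n) {R : (Fin n → ZFSet.{u}) → ZFSet.{u} → Prop}
    (hR : IsAbsolute fun w : Fin (n + 1) → ZFSet.{u} =>
      R (fun k => w k.castSucc) (w (Fin.last n))) :
    IsAbsolute fun v => ∃ x ∈ v i, R v x :=
  (ball (R := fun v x => ¬ R v x) i hR.not).not.congr fun _ => by push Not; rfl

theorem eq_insert_singleton (i j k : Fin n) :
    IsAbsolute fun v : Fin n → ZFSet.{u} => v i = {v j, v k} := by
  have h : IsAbsolute fun v : Fin n → ZFSet.{u} =>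
      v j ∈ v i ∧ v k ∈ v i ∧ ∀ x ∈ v i, x = v j ∨ x = v k :=
    (mem j i).and ((mem k i).and (ball i ((eq (.last n) j.castSucc).or (eq (.last n) k.castSucc))))
  refine h.congr fun v => ⟨fun hv => by simp [hv], fun ⟨hj, hk, hjk⟩ => ?_⟩
  ext x
  rw [ZFSet.mem_pair]
  exact ⟨hjk x, by rintro (rfl | rfl) <;> assumption⟩

theorem eq_pair (i j k : Fin n) :
    IsAbsolute fun v : Fin n → ZFSet.{u} => v i = ZFSet.pair (v j) (v k) := by
  have hj := eq_insert_singleton (Fin.last n) j.castSucc j.castSucc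
  have hk := eq_insert_singleton (Fin.last n) j.castSucc k.castSucc
  have h : IsAbsolute fun v : Fin n → ZFSet.{u} =>
      (∃ x ∈ v i, x = {v j, v j}) ∧ (∃ x ∈ v i, x = {v j, v k}) ∧
        ∀ x ∈ v i, x = {v j, v j} ∨ x = {v j, v k} :=
    (bex i hj).and ((bex i hk).and (ball i (hj.or hk)))
  refine h.congr fun v => ?_
  simp only [ZFSet.pair_eq_singleton, exists_eq_right]
  refine ⟨fun hv => by simp [hv, ZFSet.pair], fun ⟨hj, hk, hjk⟩ => ?_⟩
  ext x
  rw [ZFSet.pair, ZFSet.mem_pair]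
  exact ⟨hjk x, by rintro (rfl | rfl) <;> assumption⟩

theorem pair_mem (i j k : Fin n) :
    IsAbsolute fun v : Fin n → ZFSet.{u} => ZFSet.pair (v j) (v k) ∈ v i := by
  have h : IsAbsolute fun v : Fin n → ZFSet.{u} => ∃ x ∈ v i, x = ZFSet.pair (v j) (v k) :=
    bex i (eq_pair (.last n) j.castSucc k.castSucc)
  exact h.congr fun v => by rw [exists_eq_right]

theorem isTransitive (i : Fin n) : IsAbsolute fun v : Fin n → ZFSet.{u} => (v i).IsTransitive := by
  have h : IsAbsolute fun v : Fin n → ZFSet.{u} => ∀ x ∈ v i, ∀ y ∈ x, y ∈ v i :=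
    ball i (ball (.last n) (mem (.last (n + 1)) i.castSucc.castSucc))
  exact h.congr fun v => Iff.rfl

theorem isOrdinal (i : Fin n) : IsAbsolute fun v : Fin n → ZFSet.{u} => (v i).IsOrdinal :=
  ((isTransitive i).and (ball i (isTransitive (.last n)))).congr fun _ =>
    ZFSet.isOrdinal_iff_forall_mem_isTransitive

end IsAbsolute

namespace IsElem

variable {S T : Set ZFSet.{u}} {π : ZFSet.{u} → ZFSet.{u}}

theorem iff_of_isAbsolute (hπ : IsElem S T π) (hS : IsTransClass S) (hT : IsTransClass T) {n : ℕ}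
    {P : (Fin n → ZFSet.{u}) → Prop} (hP : IsAbsolute P) {v : Fin n → ZFSet.{u}}
    (hv : ∀ i, v i ∈ S) : P v ↔ P fun i => π (v i) := by
  obtain ⟨φ, hφ⟩ := hP
  rw [← hφ S hS v hv, hπ.2 n φ v hv, hφ T hT _ fun i => hπ.1 _ (hv i)]

theorem map_mem_map (hπ : IsElem S T π) (hS : IsTransClass S) (hT : IsTransClass T)
    {x y : ZFSet.{u}} (hx : x ∈ S) (hy : y ∈ S) (hxy : x ∈ y) : π x ∈ π y :=
  (hπ.iff_of_isAbsolute hS hT (.mem 0 1) (v := ![x, y]) (by simp [hx, hy])).1 hxy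

theorem isOrdinal_map (hπ : IsElem S T π) (hS : IsTransClass S) (hT : IsTransClass T)
    {α : ZFSet.{u}} (hα : α ∈ S) (hαo : α.IsOrdinal) : (π α).IsOrdinal :=
  (hπ.iff_of_isAbsolute hS hT (.isOrdinal 0) (v := ![α]) (by simp [hα])).1 hαo

theorem subset_map (hπ : IsElem S T π) (hS : IsTransClass S) (hT : IsTransClass T)
    {α : ZFSet.{u}} (hα : α ∈ S) (hαo : α.IsOrdinal) : α ⊆ π α := by
  induction α using ZFSet.inductionOn with
  | _ α ih =>
    intro ξ hξ
    have hξS := hS α hα ξ hξ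
    exact (hαo.mem hξ).mem_of_subset_of_mem (hπ.isOrdinal_map hS hT hα hαo)
      (ih ξ hξ hξS (hαo.mem hξ)) (hπ.map_mem_map hS hT hξS hα hξ)

theorem map_subset_self (hπ : IsElem S T π) (hS : IsTransClass S) (hT : IsTransClass T)
    {μ γ f : ZFSet.{u}} (hμ : μ ∈ S) (hγ : γ ∈ S) (hf : f ∈ S)
    (hcont : ∀ η ∈ π μ, ∃ β ∈ μ, η ∈ π β)
    (hsurj : ∀ δ ∈ γ, ∃ η ∈ μ, ZFSet.pair η δ ∈ f)
    (hbdd : ∀ β ∈ μ, ∃ σ ∈ S, (∀ η ∈ β, ∀ δ ∈ γ, ZFSet.pair η δ ∈ f → δ ∈ σ) ∧ π σ ⊆ γ) :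
    π γ ⊆ γ := by
  intro ε hε
  have hsurj_abs : IsAbsolute fun v : Fin 3 → ZFSet.{u} =>
      ∀ δ ∈ v 0, ∃ η ∈ v 1, ZFSet.pair η δ ∈ v 2 :=
    .ball 0 (.bex 1 (.pair_mem 2 4 3))
  have hbdd_abs : IsAbsolute fun v : Fin 4 → ZFSet.{u} =>
      ∀ η ∈ v 0, ∀ δ ∈ v 1, ZFSet.pair η δ ∈ v 2 → δ ∈ v 3 :=
    .ball 0 (.ball 1 ((IsAbsolute.pair_mem 2 4 5).imp (.mem 5 3)))
  obtain ⟨η, hη, hηε⟩ : ∃ η ∈ π μ, ZFSet.pair η ε ∈ π f :=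
    (hπ.iff_of_isAbsolute hS hT hsurj_abs (v := ![γ, μ, f])
      (by simp [Fin.forall_fin_succ, hγ, hμ, hf])).1 hsurj ε hε
  obtain ⟨β, hβ, hηβ⟩ := hcont η hη
  obtain ⟨σ, hσ, hfσ, hσγ⟩ := hbdd β hβ
  exact hσγ <| (hπ.iff_of_isAbsolute hS hT hbdd_abs (v := ![β, γ, f, σ])
    (by simp [Fin.forall_fin_succ, hS μ hμ β hβ, hγ, hf, hσ])).1 hfσ η hηβ ε hε hηε

end IsElem

/-! ### Surjections between sets -/

section Surjections

attribute [local instance] Classical.allZFSetDefinable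

theorem SurjFun.map {a b : ZFSet.{u}} {F : ZFSet.{u} → ZFSet.{u}} (hF : ∀ x ∈ a, F x ∈ b)
    (hsurj : ∀ y ∈ b, ∃ x ∈ a, F x = y) : SurjFun (ZFSet.map F a) a b := by
  refine ⟨ZFSet.map_isFunc.2 hF, fun y hy => ?_⟩
  obtain ⟨x, hx, rfl⟩ := hsurj y hy
  exact ⟨x, hx, ZFSet.mem_map.2 ⟨x, hx, rfl⟩⟩

theorem SurjFun.exists_pair_mem_iff {f a b : ZFSet.{u}} (hf : SurjFun f a b) :
    ∃ F : ZFSet.{u} → ZFSet.{u}, (∀ x ∈ a, F x ∈ b) ∧ (∀ y ∈ b, ∃ x ∈ a, F x = y) ∧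
      ∀ x ∈ a, ∀ y, ZFSet.pair x y ∈ f ↔ y = F x := by
  choose! F hF hFuniq using hf.1.2
  refine ⟨F, fun x hx => (ZFSet.pair_mem_prod.1 (hf.1.1 (hF x hx))).2, fun y hy => ?_,
    fun x hx y => ⟨hFuniq x hx y, by rintro rfl; exact hF x hx⟩⟩
  obtain ⟨x, hx, hxy⟩ := hf.2 y hy
  exact ⟨x, hx, (hFuniq x hx y hxy).symm⟩

namespace ModelsZFCminus

variable {S : Set ZFSet.{u}}

theorem isTransClass (hS : ModelsZFCminus S) : IsTransClass S := hS.1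

theorem pair_mem (hS : ModelsZFCminus S) {x y : ZFSet.{u}} (hx : x ∈ S) (hy : y ∈ S) :
    ZFSet.pair x y ∈ S := by
  have hpair := hS.2.2.1
  rw [ZFSet.pair, ← ZFSet.pair_eq_singleton x]
  exact hpair _ (hpair x hx x hx) _ (hpair x hx y hy)

theorem map_mem (hS : ModelsZFCminus S) {n : ℕ} {P : (Fin (n + 2) → ZFSet.{u}) → Prop}
    (hP : IsAbsolute P) {p : Fin n → ZFSet.{u}} (hp : ∀ i, p i ∈ S) {a : ZFSet.{u}} (ha : a ∈ S)
    {F : ZFSet.{u} → ZFSet.{u}} (hF : ∀ x ∈ a, F x ∈ S)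
    (hPF : ∀ x ∈ a, ∀ y ∈ S, P (Fin.snoc (Fin.snoc p x) y) ↔ y = ZFSet.pair x (F x)) :
    ZFSet.map F a ∈ S := by
  obtain ⟨φ, hφ⟩ := hP
  have hsat : ∀ x ∈ a, ∀ y,
      (y ∈ S ∧ ZSat S φ (Fin.snoc (Fin.snoc p x) y)) ↔ y = ZFSet.pair x (F x) := fun x hx y => by
    have hxS := hS.isTransClass a ha x hx
    have hpair := hS.pair_mem hxS (hF x hx)
    rw [← and_iff_right_of_imp fun hy : y = _ => hy ▸ hpair]
    refine and_congr_right fun hy => ?_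
    rw [hφ S hS.isTransClass _ (forall_snoc_mem (forall_snoc_mem hp hxS) hy), hPF x hx y hy]
  obtain ⟨b, hbS, hb⟩ := hS.2.2.2.2.2.2.1 n φ p hp a ha fun x hx =>
    ⟨_, (hsat x hx _).2 rfl, fun y => (hsat x hx y).1⟩
  obtain rfl : ZFSet.map F a = b := by
    ext y
    rw [hb, ZFSet.mem_map]
    exact exists_congr fun x => and_congr_right fun hx => by rw [hsat x hx, eq_comm]
  exact hbS

theorem exists_surjFun_refl (hS : ModelsZFCminus S) {a : ZFSet.{u}} (ha : a ∈ S) :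
    ∃ f ∈ S, SurjFun f a a := by
  have haS := hS.isTransClass a ha
  exact ⟨ZFSet.map id a, hS.map_mem (p := ![]) (.eq_pair 1 0 0) (by simp) ha haS
    fun _ _ _ _ => Iff.rfl, .map (fun _ hx => hx) fun y hy => ⟨y, hy, rfl⟩⟩

theorem exists_surjFun_trans (hS : ModelsZFCminus S) {a b c f g : ZFSet.{u}} (ha : a ∈ S)
    (hb : b ∈ S) (hc : c ∈ S) (hfS : f ∈ S) (hgS : g ∈ S) (hf : SurjFun f a b)
    (hg : SurjFun g b c) : ∃ h ∈ S, SurjFun h a c := by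
  obtain ⟨F, hFb, hFsurj, hF⟩ := hf.exists_pair_mem_iff
  obtain ⟨G, hGc, hGsurj, hG⟩ := hg.exists_pair_mem_iff
  have habs : IsAbsolute fun v : Fin 6 → ZFSet.{u} => ∃ y ∈ v 0, ∃ z ∈ v 1,
      v 5 = ZFSet.pair (v 4) z ∧ ZFSet.pair (v 4) y ∈ v 2 ∧ ZFSet.pair y z ∈ v 3 :=
    .bex 0 <| .bex 1 <|
      (IsAbsolute.eq_pair 5 4 7).and <| (IsAbsolute.pair_mem 2 4 6).and <| .pair_mem 3 6 7
  refine ⟨ZFSet.map (G ∘ F) a, hS.map_mem habs (p := ![b, c, f, g])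
    (by simp [Fin.forall_fin_succ, hb, hc, hfS, hgS]) ha (fun x hx => ?_) fun x hx w hw => ?_,
    .map (fun x hx => hGc _ (hFb x hx)) fun z hz => ?_⟩
  · exact hS.isTransClass c hc _ (hGc _ (hFb x hx))
  · change (∃ y ∈ b, ∃ z ∈ c, w = ZFSet.pair x z ∧ ZFSet.pair x y ∈ f ∧ ZFSet.pair y z ∈ g) ↔ _
    constructor
    · rintro ⟨y, hy, z, -, rfl, hxy, hyz⟩
      rw [(hG y hy z).1 hyz, (hF x hx y).1 hxy, Function.comp_apply]
    · rintro rfl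
      have hFx := hFb x hx
      exact ⟨F x, hFx, G (F x), hGc _ hFx, rfl, (hF x hx _).2 rfl, (hG _ hFx _).2 rfl⟩
  · obtain ⟨y, hy, rfl⟩ := hGsurj z hz
    obtain ⟨x, hx, rfl⟩ := hFsurj y hy
    exact ⟨x, hx, rfl⟩

theorem exists_surjFun_of_isLargestCardIn (hS : ModelsZFCminus S) {μ γ : ZFSet.{u}}
    (hμ : IsLargestCardIn S μ) (hγ : γ ∈ S) (hγo : γ.IsOrdinal) :
    ∃ f ∈ S, ∃ α ⊆ μ, SurjFun f α γ := by
  obtain ⟨α, ⟨hα, hαo, f, hf, hfα⟩, hmin⟩ := ZFSet.mem_wf.has_min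
    {α | α ∈ S ∧ α.IsOrdinal ∧ ∃ f ∈ S, SurjFun f α γ} ⟨γ, hγ, hγo, hS.exists_surjFun_refl hγ⟩
  -- By minimality, `α` is not the image in `S` of a smaller ordinal, so it is a cardinal of `S`.
  refine ⟨f, hf, α, hμ.2.2 α hα ⟨hαo, fun δ hδ g hg hgδ => ?_⟩, hfα⟩
  have hδS := hS.isTransClass α hα δ hδ
  exact hmin δ ⟨hδS, hαo.mem hδ, hS.exists_surjFun_trans hδS hα hγ hg hf hgδ hfα⟩ hδ

end ModelsZFCminus

theorem SurjFun.card_le {f a b : ZFSet.{u}} (hf : SurjFun f a b) : b.card ≤ a.card := by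
  obtain ⟨F, -, hsurj, -⟩ := hf.exists_pair_mem_iff
  exact (ZFSet.card_mono fun y hy => ZFSet.mem_image.2 (hsurj y hy)).trans ZFSet.card_image_le

theorem exists_surjFun_of_card_le {a b : ZFSet.{u}} (hb : b.Nonempty) (hba : b.card ≤ a.card) :
    ∃ f, SurjFun f a b := by
  have : Nonempty b := hb.to_subtype
  rw [← Cardinal.lift_le.{u + 1}, ← ZFSet.cardinalMk_coe_sort, ← ZFSet.cardinalMk_coe_sort] at hba
  obtain ⟨e⟩ := hba
  let G := Function.extend Subtype.val (fun x : a => ((Function.invFun e x : b) : ZFSet.{u})) id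
  have hG : ∀ x : a, G x = Function.invFun e x := Subtype.val_injective.extend_apply _ _
  refine ⟨ZFSet.map G a, .map (fun x hx => ?_) fun y hy => ?_⟩
  · rw [hG ⟨x, hx⟩]
    exact (Function.invFun e _).2
  · refine ⟨e ⟨y, hy⟩, (e ⟨y, hy⟩).2, ?_⟩
    rw [hG, Function.leftInverse_invFun e.injective]

theorem IsRegularIn.exists_bound {μ : ZFSet.{u}} (hμ : IsRegularIn Set.univ μ) {β : ZFSet.{u}}
    (hβ : β ∈ μ) {g : ZFSet.{u} → ZFSet.{u}} (hg : ∀ η ∈ β, g η ∈ μ) :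
    ∃ ξ ∈ μ, ∀ η ∈ β, g η ∈ ξ := by
  obtain ⟨-, ⟨hμo, -⟩, -, -, -, hcof⟩ := hμ
  by_contra! hunbdd
  refine ZFSet.mem_irrefl β (hcof β trivial (hμo.mem hβ)
    ⟨ZFSet.map g β, trivial, ZFSet.map_isFunc.2 hg, fun ξ hξ => ?_⟩ hβ)
  obtain ⟨η, hη, hξη⟩ := hunbdd ξ hξ
  have hgη := hg η hη
  rw [ZFSet.IsOrdinal.notMem_iff_subset (hμo.mem hgη) (hμo.mem hξ),
    ZFSet.IsOrdinal.subset_iff_eq_or_mem (hμo.mem hξ) (hμo.mem hgη)] at hξη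
  exact ⟨η, hη, g η, ZFSet.mem_map.2 ⟨η, hη, rfl⟩, hξη.symm⟩

end Surjections

/-! ### Regular and successor cardinals -/

theorem IsRegularIn.exists_mem_of_mem {μ : ZFSet.{u}} (hμ : IsRegularIn Set.univ μ) {ξ : ZFSet.{u}}
    (hξ : ξ ∈ μ) : ∃ ξ' ∈ μ, ξ ∈ ξ' := by
  have hone : insert ∅ ∅ ∈ μ := hμ.1 (ZFSet.omega_succ ZFSet.omega_zero)
  obtain ⟨ξ', hξ', h⟩ := hμ.exists_bound hone (g := fun _ => ξ) fun _ _ => hξ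
  exact ⟨ξ', hξ', h ∅ (ZFSet.mem_insert _ _)⟩

theorem aleph0_le_card_omega : Cardinal.aleph0 ≤ ZFSet.omega.{u}.card := by
  have hnat : ∀ n : ℕ, (n : Ordinal.{u}).toZFSet ∈ ZFSet.omega := fun n => by
    induction n with
    | zero => simp [ZFSet.omega_zero]
    | succ n ih => simpa [Ordinal.toZFSet_add_one] using ZFSet.omega_succ ih
  have hsub : Ordinal.omega0.toZFSet ⊆ ZFSet.omega.{u} := fun x hx => by
    obtain ⟨a, ha, rfl⟩ := Ordinal.mem_toZFSet_iff.1 hx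
    obtain ⟨n, rfl⟩ := Ordinal.lt_omega0.1 ha
    exact hnat n
  simpa using ZFSet.card_mono hsub

theorem IsCardIn.card_lt {κ α : ZFSet.{u}} (hκ : IsCardIn Set.univ κ) (hα : α ∈ κ) :
    α.card < κ.card := by
  by_contra! hle
  obtain ⟨f, hf⟩ := exists_surjFun_of_card_le ⟨α, hα⟩ hle
  exact hκ.2 α hα f trivial hf

theorem mem_toZFSet_ord_iff {α : ZFSet.{u}} (hα : α.IsOrdinal) {c : Cardinal.{u}} :
    α ∈ c.ord.toZFSet ↔ α.card < c := by
  rw [← hα.toZFSet_rank_eq, Ordinal.toZFSet_mem_toZFSet_iff, Cardinal.lt_ord, Ordinal.card_toZFSet]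

theorem isCardIn_toZFSet_ord (c : Cardinal.{u}) : IsCardIn Set.univ c.ord.toZFSet := by
  have hco := ZFSet.isOrdinal_toZFSet c.ord
  refine ⟨hco, fun α hα f _ hf => ?_⟩
  have hle := hf.card_le
  rw [Ordinal.card_toZFSet, Cardinal.card_ord] at hle
  exact hle.not_gt ((mem_toZFSet_ord_iff (hco.mem hα)).1 hα)

namespace CardSuccIn

variable {μ ν : ZFSet.{u}}

theorem eq_toZFSet (hν : CardSuccIn Set.univ μ ν) :
    ν = (Order.succ μ.card).ord.toZFSet := by
  obtain ⟨-, hνc, hμν, hmin⟩ := hν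
  refine subset_antisymm (hmin _ trivial (isCardIn_toZFSet_ord _)
    ((mem_toZFSet_ord_iff (hνc.1.mem hμν)).2 (Order.lt_succ _))) ?_
  rw [← ZFSet.IsOrdinal.notMem_iff_subset hνc.1 (ZFSet.isOrdinal_toZFSet _),
    mem_toZFSet_ord_iff hνc.1, not_lt, Order.succ_le_iff]
  exact hνc.card_lt hμν

theorem exists_bound (hν : CardSuccIn Set.univ μ ν) (hμ : ZFSet.omega ⊆ μ) {a : ZFSet.{u}}
    (ha : a.card ≤ μ.card) {g : ZFSet.{u} → ZFSet.{u}} (hg : ∀ x ∈ a, g x ∈ ν) :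
    ∃ ε ∈ ν, ∀ x ∈ a, g x ∈ ε := by
  have hreg := Cardinal.isRegular_succ (aleph0_le_card_omega.trans (ZFSet.card_mono hμ))
  rw [hν.eq_toZFSet] at hg ⊢
  choose! o ho hog using fun x hx => Ordinal.mem_toZFSet_iff.1 (hg x hx)
  let o' : Shrink.{u} a → Ordinal.{u} := fun i => o ((equivShrink a).symm i)
  have hsup : ⨆ i, (o' i + 1) < (Order.succ μ.card).ord :=
    Ordinal.iSup_add_one_lt_of_lt_cof (by rw [hreg.cof_ord]; exact Order.lt_succ_of_le ha)
      fun i => ho _ ((equivShrink a).symm i).2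
  refine ⟨_, Ordinal.toZFSet_mem_toZFSet_iff.2 hsup, fun x hx => ?_⟩
  rw [← hog x hx, Ordinal.toZFSet_mem_toZFSet_iff]
  simpa [o'] using Ordinal.lt_iSup_add_one o' (equivShrink a ⟨x, hx⟩)

end CardSuccIn

/-! ### Suprema of increasing sequences -/

section Suprema

open scoped ZFSet

namespace IsSupOf

variable {γ : ZFSet.{u}}

theorem exists_mem {A : Set ZFSet.{u}} (hγ : IsSupOf γ A) (hA : ∀ a ∈ A, a.IsOrdinal)
    {ε : ZFSet.{u}} (hε : ε ∈ γ) : ∃ a ∈ A, ε ∈ a := by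
  by_contra! hle
  have hεo := hγ.1.mem hε
  exact ZFSet.mem_irrefl ε <| hγ.2.2 ε hεo
    (fun a ha => (hεo.notMem_iff_subset (hA a ha)).1 (hle a ha)) hε

end IsSupOf

theorem isSupOf_iUnion {a : ZFSet.{u}} {s : ZFSet.{u} → ZFSet.{u}}
    (hs : ∀ x ∈ a, (s x).IsOrdinal) : IsSupOf (⋃ x : a, s x) {y | ∃ x ∈ a, y = s x} := by
  refine ⟨ZFSet.isOrdinal_iff_forall_mem_isTransitive.2
    ⟨.iUnion fun x => (hs x x.2).isTransitive, fun y hy => ?_⟩, ?_, fun β _ hβ y hy => ?_⟩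
  · obtain ⟨x, hx⟩ := ZFSet.mem_iUnion.1 hy
    exact ((hs x x.2).mem hx).isTransitive
  · rintro _ ⟨x, hx, rfl⟩ y hy
    exact ZFSet.mem_iUnion.2 ⟨⟨x, hx⟩, hy⟩
  · obtain ⟨x, hx⟩ := ZFSet.mem_iUnion.1 hy
    exact hβ _ ⟨x, x.2, rfl⟩ hx

namespace CardSuccIn

variable {μ ν : ZFSet.{u}} {f : ZFSet.{u} → ZFSet.{u}}

theorem iUnion_mem (hν : CardSuccIn Set.univ μ ν) (hμ : ZFSet.omega ⊆ μ) {a : ZFSet.{u}}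
    (ha : a.card ≤ μ.card) {s : ZFSet.{u} → ZFSet.{u}} (hs : ∀ x ∈ a, s x ∈ ν) :
    ⋃ x : a, s x ∈ ν := by
  have hνo := hν.2.1.1
  have hsup := isSupOf_iUnion fun x hx => hνo.mem (hs x hx)
  obtain ⟨ε, hε, hsε⟩ := hν.exists_bound hμ ha hs
  refine hsup.1.mem_of_subset_of_mem hνo (hsup.2.2 ε (hνo.mem hε) ?_) hε
  rintro _ ⟨x, hx, rfl⟩
  exact (hνo.mem hε).subset_of_mem (hsε x hx)

theorem exists_seq_map_mem (hν : CardSuccIn Set.univ μ ν) (hμ : ZFSet.omega ⊆ μ)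
    (hf : ∀ α ∈ ν, f α ∈ ν) :
    ∃ s : ZFSet.{u} → ZFSet.{u}, ∀ ξ ∈ μ, s ξ ∈ ν ∧ ∀ η ∈ ξ, f (s η) ∈ s ξ := by
  classical
  have hμo : μ.IsOrdinal := hν.2.1.1.mem hν.2.2.1
  have hbdd : ∀ ξ ∈ μ, ∀ t : ZFSet.{u} → ZFSet.{u}, (∀ η ∈ ξ, t η ∈ ν) →
      ∃ ε ∈ ν, ∀ η ∈ ξ, f (t η) ∈ ε := fun ξ hξ t ht =>
    hν.exists_bound hμ (ZFSet.card_mono (hμo.subset_of_mem hξ)) fun η hη => hf _ (ht η hη)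
  choose! b hbν hb using hbdd
  let s : ZFSet.{u} → ZFSet.{u} :=
    ZFSet.mem_wf.fix fun ξ ih => b ξ fun η => if h : η ∈ ξ then ih η h else ∅
  have hs : ∀ ξ, s ξ = b ξ fun η => if η ∈ ξ then s η else ∅ := ZFSet.mem_wf.fix_eq _
  have hsν : ∀ ξ ∈ μ, s ξ ∈ ν := fun ξ => by
    induction ξ using ZFSet.inductionOn with
    | _ ξ ih =>
      intro hξ
      rw [hs]
      refine hbν ξ hξ _ fun η hη => ?_
      rw [if_pos hη]
      exact ih η hη (hμo.mem_trans hη hξ)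
  refine ⟨s, fun ξ hξ => ⟨hsν ξ hξ, fun η hη => ?_⟩⟩
  have h := hb ξ hξ (fun η => if η ∈ ξ then s η else ∅) (fun η hη => ?_) η hη
  · rwa [← hs, if_pos hη] at h
  · rw [if_pos hη]
    exact hsν η (hμo.mem_trans hη hξ)

theorem exists_isSupOf_map_mem (hν : CardSuccIn Set.univ μ ν) (hμ : IsRegularIn Set.univ μ)
    (hf : ∀ α ∈ ν, f α ∈ ν) {β : ZFSet.{u}} (hβ : β ∈ ν) :
    ∃ γ ∈ ν, β ∈ γ ∧ ∃ s : ZFSet.{u} → ZFSet.{u},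
      (∀ ξ η : ZFSet.{u}, ξ ∈ η → η ∈ μ → s ξ ∈ s η) ∧
        IsSupOf γ {y | ∃ ξ ∈ μ, y = s ξ} ∧ ∀ ξ ∈ μ, f (s ξ) ∈ γ := by
  have hνo := hν.2.1.1
  have hdir : ∀ α ∈ ν, ∀ α' ∈ ν, ∃ δ ∈ ν, α ⊆ δ ∧ α' ⊆ δ := fun α hα α' hα' =>
    ((hνo.mem hα).subset_total (hνo.mem hα')).elim (fun h => ⟨α', hα', h, subset_rfl⟩)
      fun h => ⟨α, hα, subset_rfl, h⟩
  have hg : ∀ α ∈ ν, ∃ δ ∈ ν, β ⊆ δ ∧ α ⊆ δ ∧ f α ⊆ δ := fun α hα => by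
    obtain ⟨δ, hδ, hαδ, hfδ⟩ := hdir α hα (f α) (hf α hα)
    obtain ⟨δ', hδ', hβδ', hδδ'⟩ := hdir β hβ δ hδ
    exact ⟨δ', hδ', hβδ', hαδ.trans hδδ', hfδ.trans hδδ'⟩
  choose! g hgν hβg hle hfg using hg
  obtain ⟨s, hs⟩ := hν.exists_seq_map_mem hμ.1 hgν
  have hsν : ∀ ξ ∈ μ, s ξ ∈ ν := fun ξ hξ => (hs ξ hξ).1
  have hmem : ∀ α ∈ ν, ∀ ξ η, ξ ∈ η → η ∈ μ → α ⊆ g (s ξ) → α ∈ s η :=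
    fun α hα ξ η hξη hη h =>
      (hνo.mem hα).mem_of_subset_of_mem (hνo.mem (hsν η hη)) h ((hs η hη).2 ξ hξη)
  have hsup := isSupOf_iUnion fun ξ hξ => hνo.mem (hsν ξ hξ)
  have hmem_sup : ∀ α ∈ ν, ∀ ξ ∈ μ, α ⊆ g (s ξ) → α ∈ ⋃ η : μ, s η := fun α hα ξ hξ h => by
    obtain ⟨η, hη, hξη⟩ := hμ.exists_mem_of_mem hξ
    exact hsup.2.1 _ ⟨η, hη, rfl⟩ (hmem α hα ξ η hξη hη h)
  have hzero : ∅ ∈ μ := hμ.1 ZFSet.omega_zero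
  refine ⟨_, hν.iUnion_mem hμ.1 le_rfl hsν, hmem_sup β hβ ∅ hzero (hβg _ (hsν ∅ hzero)), s,
    fun ξ η hξη hη => ?_, hsup, fun ξ hξ => ?_⟩
  · have hξ := hsν ξ (hμ.2.1.1.mem_trans hξη hη)
    exact hmem _ hξ ξ η hξη hη (hle _ hξ)
  · exact hmem_sup _ (hf _ (hsν ξ hξ)) ξ hξ (hfg _ (hsν ξ hξ))

end CardSuccIn

end Suprema

theorem IsElem.map_eq_of_isSupOf {S T : Set ZFSet.{u}} {π : ZFSet.{u} → ZFSet.{u}}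
    (hπ : IsElem S T π) (hS : ModelsZFCminus S) (hT : IsTransClass T) {μ γ : ZFSet.{u}}
    (hμ : IsRegularIn Set.univ μ) (hlc : IsLargestCardIn S μ)
    (hcont : IsSupOf (π μ) {y | ∃ β ∈ μ, y = π β}) (hγ : γ ∈ S) {s : ZFSet.{u} → ZFSet.{u}}
    (hinc : ∀ ξ η : ZFSet.{u}, ξ ∈ η → η ∈ μ → s ξ ∈ s η)
    (hsup : IsSupOf γ {y | ∃ ξ ∈ μ, y = s ξ}) (hcl : ∀ ξ ∈ μ, π (s ξ) ⊆ γ) : π γ = γ := by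
  have hStr := hS.isTransClass
  have hμo := hμ.2.1.1
  have hsγ : ∀ ξ ∈ μ, s ξ ∈ γ := fun ξ hξ => by
    obtain ⟨ξ', hξ', h⟩ := hμ.exists_mem_of_mem hξ
    exact hsup.2.1 _ ⟨ξ', hξ', rfl⟩ (hinc ξ ξ' h hξ')
  obtain ⟨f, hf, α, hαμ, hfα⟩ := hS.exists_surjFun_of_isLargestCardIn hlc hγ hsup.1
  have hbdd : ∀ δ ∈ γ, ∃ ξ ∈ μ, δ ∈ s ξ := fun δ hδ => by
    obtain ⟨_, ⟨ξ, hξ, rfl⟩, hδξ⟩ := hsup.exists_mem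
      (by rintro _ ⟨ξ, hξ, rfl⟩; exact hsup.1.mem (hsγ ξ hξ)) hδ
    exact ⟨ξ, hξ, hδξ⟩
  have hindex : ∀ η, ∃ ξ ∈ μ, ∀ δ, ZFSet.pair η δ ∈ f → δ ∈ s ξ := fun η => by
    by_cases hη : η ∈ α
    · obtain ⟨δ, hδ, huniq⟩ := hfα.1.2 η hη
      obtain ⟨ξ, hξ, hδξ⟩ := hbdd δ (ZFSet.pair_mem_prod.1 (hfα.1.1 hδ)).2
      exact ⟨ξ, hξ, fun δ' hδ' => by rwa [huniq δ' hδ']⟩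
    · exact ⟨∅, hμ.1 ZFSet.omega_zero, fun δ hδ =>
        absurd (ZFSet.pair_mem_prod.1 (hfα.1.1 hδ)).1 hη⟩
  choose g hgμ hg using hindex
  refine subset_antisymm ?_ (hπ.subset_map hStr hT hγ hsup.1)
  refine hπ.map_subset_self hStr hT hlc.1 hγ hf (fun η hη => ?_) (fun δ hδ => ?_) fun β hβ => ?_
  · obtain ⟨_, ⟨β, hβ, rfl⟩, hηβ⟩ := hcont.exists_mem
      (by rintro _ ⟨β, hβ, rfl⟩
          exact hπ.isOrdinal_map hStr hT (hStr μ hlc.1 β hβ) (hμo.mem hβ)) hη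
    exact ⟨β, hβ, hηβ⟩
  · obtain ⟨η, hη, hηδ⟩ := hfα.2 δ hδ
    exact ⟨η, hαμ hη, hηδ⟩
  · obtain ⟨ξ, hξ, hgξ⟩ := hμ.exists_bound hβ fun η _ => hgμ η
    refine ⟨s ξ, hStr γ hγ _ (hsγ ξ hξ), fun η hη δ _ hηδ => ?_, hcl ξ hξ⟩
    exact (hsup.1.mem (hsγ ξ hξ)).mem_trans (hg η δ hηδ) (hinc _ _ (hgξ η hη) hξ)

/-- Let `μ` be a regular cardinal and `M, N` transitive models of ZFC⁻ with
`o(M) = o(N) = μ⁺` and `μ` the largest cardinal of `M`.  If `π : M → N` is elementary and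
continuous at `μ`, then the set of fixed points of `π` belongs to the `μ`-club filter on `μ⁺`. -/
theorem fixed_points_mu_club (μ ν M N : ZFSet)
    (hμ : IsRegularIn Set.univ μ)
    (hν : CardSuccIn Set.univ μ ν)
    (hM : ModelsZFCminus M.toSet) (hN : ModelsZFCminus N.toSet)
    (hoM : ∀ x : ZFSet, (x ∈ M ∧ x.IsOrdinal) ↔ x ∈ ν)
    (hoN : ∀ x : ZFSet, (x ∈ N ∧ x.IsOrdinal) ↔ x ∈ ν)
    (hlc : IsLargestCardIn M.toSet μ)
    (π : ZFSet → ZFSet) (hπ : IsElem M.toSet N.toSet π)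
    (hcont : IsSupOf (π μ) {y | ∃ β ∈ μ, y = π β}) :
    {α : ZFSet | α ∈ ν ∧ π α = α} ∈ muClubFilter μ ν := by
  have hνo := hν.2.1.1
  have hνM : ∀ α ∈ ν, α ∈ M := fun α hα => ((hoM α).2 hα).1
  have hπν : ∀ α ∈ ν, π α ∈ ν := fun α hα => (hoN _).1
    ⟨hπ.1 α (hνM α hα), hπ.isOrdinal_map hM.1 hN.1 (hνM α hα) (hνo.mem hα)⟩
  refine Filter.mem_generate_of_mem ⟨fun α hα => hα.1, fun β hβ => ?_, ?_⟩
  · obtain ⟨γ, hγ, hβγ, s, hinc, hsup, hcl⟩ := hν.exists_isSupOf_map_mem hμ hπν hβ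
    exact ⟨γ, ⟨hγ, hπ.map_eq_of_isSupOf hM hN.1 hμ hlc hcont (hνM γ hγ) hinc hsup fun ξ hξ =>
      (hνo.mem hγ).subset_of_mem (hcl ξ hξ)⟩, .inl hβγ⟩
  · intro s hs hinc γ hγ hsup
    refine ⟨hγ, hπ.map_eq_of_isSupOf hM hN.1 hμ hlc hcont (hνM γ hγ) hinc hsup fun ξ hξ => ?_⟩
    rw [(hs ξ hξ).2]
    exact hsup.2.1 _ ⟨ξ, hξ, rfl⟩
end
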